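/- For every g ∈ O₇(𝔽₇), the conjugate g⁻¹·A₇·g does NOT vanish at all positions of P; that is, there exists a position (i,j) ∈ P with (g⁻¹·A₇·g)ᵢⱼ ≠ 0. -/

import Mathlib

open Matrix

/-- The 7×7 anti-diagonal identity matrix over `𝔽₇` (0-indexed: entry 1 iff `i + j = 6`). -/
def Jmat : Matrix (Fin 7) (Fin 7) (ZMod 7) :=
  fun i j => if (i : ℕ) + (j : ℕ) = 6 then 1 else 0

/-- The matrix `A₇ ∈ M₇(𝔽₇)` from Appendix A of the paper. -/
def A7 : Matrix (Fin 7) (Fin 7) (ZMod 7) :=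
  !![0,0,4,2,2,0,0;
     1,0,0,0,0,0,0;
     0,3,0,0,0,0,2;
     0,0,0,0,0,0,2;
     0,1,0,0,0,0,4;
     0,0,1,0,3,0,0;
     0,0,0,0,0,1,0]

/-- The set of matrix positions of Lemma 2.2 (0-indexed; in the paper's 1-indexed
convention these are (3,1),(4,1),(5,1),(5,2),(6,1),(6,2),(6,3),(7,1),(7,2),(7,3),(7,4),(7,5)). -/
def P : Set (Fin 7 × Fin 7) :=
  {(2,0),(3,0),(4,0),(4,1),(5,0),(5,1),(5,2),(6,0),(6,1),(6,2),(6,3),(6,4)}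

def Tm : Matrix (Fin 7) (Fin 7) (ZMod 7) := !![0,0,5,4,6,0,0; 6,6,4,5,1,1,1; 6,5,2,6,4,1,2; 6,4,3,4,3,6,4; 6,3,1,3,2,1,4; 6,2,6,1,6,6,2; 6,1,5,2,5,6,1]

def dv : Fin 7 → ZMod 7 := ![6,1,4,2,2,4,1]

def av : Fin 7 → ZMod 7 := ![0,1,2,3,4,5,6]

def sqB (z : ZMod 7) : Bool := z == 0 || z == 1 || z == 2 || z == 4

theorem sqB_sq : ∀ y : ZMod 7, sqB (y * y) = true := by decide

theorem sq_zero_aux : ∀ y : ZMod 7, y * y = 0 → y = 0 := by decide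

set_option maxRecDepth 100000 in
theorem key_dec : ∀ z0 z1 z2 : ZMod 7, (sqB z0 && (sqB z1 && (sqB z2 &&
    (sqB (3*z0+2*z1+6*z2) && (sqB (2*z0+3*z1+5*z2) &&
    (sqB (2*z0+5*z1+3*z2) && (sqB (4*z0+4*z1+4*z2) &&
    sqB (0*z0+1*z1+1*z2+1*(3*z0+2*z1+6*z2)+1*(2*z0+3*z1+5*z2)+1*(2*z0+5*z1+3*z2)+1*(4*z0+4*z1+4*z2))))))))) = true →
    z0 = 0 ∧ z1 = 0 ∧ z2 = 0 := by decide

theorem T_A : Tm * A7 = diagonal av * Tm := by decide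

theorem T_J : Tmᵀ * diagonal dv * Tm = Jmat := by decide

theorem J_J : Jmat * Jmat = 1 := by decide

theorem stmt12 (g : Matrix (Fin 7) (Fin 7) (ZMod 7)) (hg : gᵀ * Jmat * g = Jmat) :
    ∃ p ∈ P, (g⁻¹ * A7 * g) p.1 p.2 ≠ 0 := by
  by_contra hcon
  push Not at hcon
  have hinv : (Jmat * gᵀ * Jmat) * g = 1 := by
    rw [Matrix.mul_assoc Jmat, Matrix.mul_assoc Jmat, hg, J_J]
  have hgi : g * g⁻¹ = 1 := by
    rw [Matrix.inv_eq_left_inv hinv]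
    exact mul_eq_one_comm.mp hinv
  generalize hB : g⁻¹ * A7 * g = B at hcon
  have hAB : A7 * g = g * B := by
    rw [← hB, ← Matrix.mul_assoc, ← Matrix.mul_assoc, hgi, Matrix.one_mul]
  obtain ⟨h, hh⟩ : ∃ h, h = Tm * g := ⟨_, rfl⟩
  have hD : diagonal av * h = h * B := by
    rw [hh, ← Matrix.mul_assoc, ← T_A, Matrix.mul_assoc, hAB, Matrix.mul_assoc]
  have hJ : hᵀ * diagonal dv * h = Jmat := by
    rw [hh, Matrix.transpose_mul, ← hg, ← T_J]
    simp only [Matrix.mul_assoc]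
  have b20 := hcon (2,0) (by simp [P])
  have b30 := hcon (3,0) (by simp [P])
  have b40 := hcon (4,0) (by simp [P])
  have b50 := hcon (5,0) (by simp [P])
  have b60 := hcon (6,0) (by simp [P])
  have b41 := hcon (4,1) (by simp [P])
  have b51 := hcon (5,1) (by simp [P])
  have b61 := hcon (6,1) (by simp [P])
  simp only at b20 b30 b40 b50 b60 b41 b51 b61
  -- scalar forms
  have e0 : ∀ a, av a * h a 0 = h a 0 * B 0 0 + h a 1 * B 1 0 := by
    intro a
    have := congrFun (congrFun hD a) 0
    rw [Matrix.diagonal_mul] at this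
    simpa [Matrix.mul_apply, Fin.sum_univ_seven, b20, b30, b40, b50, b60] using this
  have e1 : ∀ a, av a * h a 1 = h a 0 * B 0 1 + h a 1 * B 1 1 + h a 2 * B 2 1 + h a 3 * B 3 1 := by
    intro a
    have := congrFun (congrFun hD a) 1
    rw [Matrix.diagonal_mul] at this
    simpa [Matrix.mul_apply, Fin.sum_univ_seven, b41, b51, b61] using this
  have G : ∀ i j, ∑ a, dv a * h a i * h a j = Jmat i j := by
    intro i j
    rw [← hJ, Matrix.mul_apply]
    refine Finset.sum_congr rfl fun a _ => ?_
    rw [Matrix.mul_diagonal, Matrix.transpose_apply]; ring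
  have e2 : ∃ p q r : ZMod 7, ∀ a, av a * (av a * h a 0) = p * h a 0 + q * h a 1 + r * h a 2
      + (B 1 0 * B 3 1) * h a 3 := by
    refine ⟨B 0 0 * B 0 0 + B 1 0 * B 0 1, B 0 0 * B 1 0 + B 1 0 * B 1 1, B 1 0 * B 2 1, fun a => ?_⟩
    linear_combination (av a + B 0 0) * e0 a + B 1 0 * e1 a
  obtain ⟨p, q, r, e2⟩ := e2
  -- expansion of the form on combinations of the first four columns
  have X : ∀ c0 c1 c2 c3 f0 f1 f2 f3 : ZMod 7,
      ∑ a, dv a * (c0 * h a 0 + c1 * h a 1 + c2 * h a 2 + c3 * h a 3)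
        * (f0 * h a 0 + f1 * h a 1 + f2 * h a 2 + f3 * h a 3) = c3 * f3 := by
    intro c0 c1 c2 c3 f0 f1 f2 f3
    have e : ∀ a, dv a * (c0 * h a 0 + c1 * h a 1 + c2 * h a 2 + c3 * h a 3)
        * (f0 * h a 0 + f1 * h a 1 + f2 * h a 2 + f3 * h a 3)
        = ∑ i : Fin 4, ∑ j : Fin 4, (![c0,c1,c2,c3] i * ![f0,f1,f2,f3] j)
          * (dv a * h a (i.castLE (by decide)) * h a (j.castLE (by decide))) := by
      intro a
      simp [Fin.sum_univ_four]
      ring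
    simp only [e]
    rw [Finset.sum_comm]
    simp only [Finset.sum_comm (s := (Finset.univ : Finset (Fin 7))), ← Finset.mul_sum, G]
    simp [Fin.sum_univ_four, Jmat]
  have Q0 := X 1 0 0 0 1 0 0 0
  have Q1 := X 1 0 0 0 (B 0 0) (B 1 0) 0 0
  have Q2 := X (B 0 0) (B 1 0) 0 0 (B 0 0) (B 1 0) 0 0
  have Q3 := X (B 0 0) (B 1 0) 0 0 p q r (B 1 0 * B 3 1)
  have Q4 := X p q r (B 1 0 * B 3 1) p q r (B 1 0 * B 3 1)
  have e0' : ∀ a, B 0 0 * h a 0 + B 1 0 * h a 1 = av a * h a 0 := fun a => by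
    rw [e0]; ring
  simp only [← e2, e0', zero_mul, mul_zero, add_zero, one_mul] at Q0 Q1 Q2 Q3 Q4
  have G6 := G 0 6
  obtain ⟨z, hz⟩ : ∃ z : Fin 7 → ZMod 7, ∀ a, z a = h a 0 * h a 0 := ⟨_, fun _ => rfl⟩
  have R : ∀ (f : Fin 7 → ZMod 7) (t : ZMod 7), ∑ a, f a * (h a 0 * h a 0) = t →
      f 0 * z 0 + f 1 * z 1 + f 2 * z 2 + f 3 * z 3 + f 4 * z 4 + f 5 * z 5 + f 6 * z 6 = t := by
    intro f t ht
    rw [← ht, Fin.sum_univ_seven]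
    simp only [hz]
  have R0 := R dv _ (Eq.trans (Finset.sum_congr rfl fun a _ => by ring) Q0)
  have R1 := R (fun a => dv a * av a) _ (Eq.trans (Finset.sum_congr rfl fun a _ => by ring) Q1)
  have R2 := R (fun a => dv a * av a ^ 2) _ (Eq.trans (Finset.sum_congr rfl fun a _ => by ring) Q2)
  have R3 := R (fun a => dv a * av a ^ 3) _ (Eq.trans (Finset.sum_congr rfl fun a _ => by ring) Q3)
  have R4 := R (fun a => dv a * av a ^ 4) _ (Eq.trans (Finset.sum_congr rfl fun a _ => by ring) Q4)
  have sz : ∀ a, sqB (z a) = true := fun a => by rw [hz]; exact sqB_sq _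
  have s4 := sqB_sq (B 1 0 * B 3 1)
  rw [← R4] at s4
  have R0' : 6 * z 0 + 1 * z 1 + 4 * z 2 + 2 * z 3 + 2 * z 4 + 4 * z 5 + 1 * z 6 = 0 := R0
  have R1' : 0 * z 0 + 1 * z 1 + 1 * z 2 + 6 * z 3 + 1 * z 4 + 6 * z 5 + 6 * z 6 = 0 := R1
  have R2' : 0 * z 0 + 1 * z 1 + 2 * z 2 + 4 * z 3 + 4 * z 4 + 2 * z 5 + 1 * z 6 = 0 := R2
  have R3' : 0 * z 0 + 1 * z 1 + 4 * z 2 + 5 * z 3 + 2 * z 4 + 3 * z 5 + 6 * z 6 = 0 := R3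
  change sqB (0 * z 0 + 1 * z 1 + 1 * z 2 + 1 * z 3 + 1 * z 4 + 1 * z 5 + 1 * z 6) = true at s4
  have h7 : (7 : ZMod 7) = 0 := by decide
  have y3 : z 3 = 3 * z 0 + 2 * z 1 + 6 * z 2 := by
    linear_combination 3 * R0' + 2 * R1' + 3 * R2' + 4 * R3' + ((-3) * z 0 + (-2) * z 1 + (-6) * z 2 + (-7) * z 3 + (-4) * z 4 + (-6) * z 5 + (-6) * z 6) * h7
  have y4 : z 4 = 2 * z 0 + 3 * z 1 + 5 * z 2 := by
    linear_combination 2 * R0' + 0 * R1' + 0 * R2' + 2 * R3' + ((-2) * z 0 + (-1) * z 1 + (-3) * z 2 + (-2) * z 3 + (-1) * z 4 + (-2) * z 5 + (-2) * z 6) * h7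
  have y5 : z 5 = 2 * z 0 + 5 * z 1 + 3 * z 2 := by
    linear_combination 2 * R0' + 2 * R1' + 6 * R2' + 6 * R3' + ((-2) * z 0 + (-3) * z 1 + (-7) * z 2 + (-10) * z 3 + (-6) * z 4 + (-7) * z 5 + (-8) * z 6) * h7
  have y6 : z 6 = 4 * z 0 + 4 * z 1 + 4 * z 2 := by
    linear_combination 4 * R0' + 2 * R1' + 5 * R2' + 6 * R3' + ((-4) * z 0 + (-3) * z 1 + (-8) * z 2 + (-10) * z 3 + (-6) * z 4 + (-8) * z 5 + (-8) * z 6) * h7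
  have s3 := sz 3
  have s4' := sz 4
  have s5 := sz 5
  have s6 := sz 6
  rw [y3] at s3
  rw [y4] at s4'
  rw [y5] at s5
  rw [y6] at s6
  rw [y3, y4, y5, y6] at s4
  obtain ⟨w0, w1, w2⟩ := key_dec (z 0) (z 1) (z 2) (by
    rw [sz 0, sz 1, sz 2, s3, s4', s5, s6, s4]; rfl)
  rw [w0, w1, w2] at y3 y4 y5 y6
  simp only [mul_zero, add_zero] at y3 y4 y5 y6
  have hv : ∀ a, h a 0 = 0 := by
    intro a
    apply sq_zero_aux
    rw [← hz]
    fin_cases a <;> assumption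
  simp [hv, Jmat] at G6
  exact absurd G6 (by decide)
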